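/- arXiv:2202.05224 — 3 statements merged into one kernel-verified Lean document; each statement's English description precedes it below -/
import Mathlib

section
/- Let d ≥ 2 and κ ≥ 1, and for λ ∈ ℕ define the rescaled kernel K_{κ/λ,1}(s,y) = ∫_{ℝ^d} e^{i(s|ξ| + y·ξ)} ζ̃_{κ,λ}(λξ) dξ. There exists a constant C > 0 such that sup_{y∈ℝ^d} |K_{κ/λ,1}(s,y)| ≤ C ( λ^{−1} s^{−(d−1)/2} + λ^{−1} (s/λ)^{−(d−1)} ) for all s > 0 and all λ ∈ ℕ with λ ≥ κ + 1. -/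
open MeasureTheory Complex
open scoped RealInnerProductSpace ENNReal

/-!
In polar coordinates the kernel is the integral of
`r ^ (d - 1) e ^ {i r (s + ⟪y, ω⟫)} ζ (λ (r - 1))` over the unit sphere and `r > 0`, and the cutoff
confines `r` to an interval of length `O(1 / λ)`.

* If `‖y‖ ≥ s / 2`, integrate over the sphere first: the Fourier transform of the surface measure at
  `r y` is `O(‖r y‖ ^ (-(d - 1) / 2))`, and the `r`-integration contributes the factor `1 / λ`.
* If `‖y‖ ≤ s / 2`, integrate in `r` first: the phase has slope `A = s + ⟪y, ω⟫ ≥ s / 2`, and after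
  the substitution `r = 1 + u / λ` the radial integral is `1 / λ` times the Fourier transform at
  frequency `A / λ` of a `C ^ (d - 1)` function of compact support, bounded uniformly in `λ`.

The decay of the Fourier transform of the sphere needs no stationary phase. Reflection symmetry
gives the Bessel-type equation `r (u + u'') = -(d - 1) u'` for its restriction `u` to a ray.
Multiplying `u` by `r ^ ((d - 1) / 2)` turns this into an oscillator with a perturbation of size
`O(r⁻²)`, which is integrable at infinity, so that the energy stays bounded.
-/

namespace HalfWave

open Metric Set Module
open scoped Pointwise FourierTransform

section Oscillator

theorem antitoneOn_mul_exp_div_of_deriv_le {f f' : ℝ → ℝ} {c R : ℝ} (hR : 0 < R)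
    (hf : ∀ r, R ≤ r → HasDerivAt f (f' r) r) (hf' : ∀ r, R ≤ r → f' r ≤ c / r ^ 2 * f r) :
    AntitoneOn (fun r => f r * Real.exp (c / r)) (Ici R) := by
  have hderiv : ∀ r, R ≤ r → HasDerivAt (fun r => f r * Real.exp (c / r))
      ((f' r - c / r ^ 2 * f r) * Real.exp (c / r)) r := fun r hr => by
    refine ((hf r hr).mul ((hasDerivAt_const r c).div (hasDerivAt_id r)
      (hR.trans_le hr).ne').exp).congr_deriv ?_
    simp only [id, Pi.div_apply]
    ring
  refine antitoneOn_of_hasDerivWithinAt_nonpos (convex_Ici R)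
    (fun r hr => (hderiv r hr).continuousAt.continuousWithinAt)
    (fun r hr => (hderiv r (interior_subset hr)).hasDerivWithinAt) fun r hr => ?_
  exact mul_nonpos_of_nonpos_of_nonneg (sub_nonpos.mpr (hf' r (interior_subset hr)))
    (Real.exp_pos _).le

variable {F : Type*} [NormedAddCommGroup F] [InnerProductSpace ℝ F]

theorem norm_le_exp_mul_of_perturbed_oscillator {g g' : ℝ → F} {q : ℝ → ℝ} {c R : ℝ} (hR : 0 < R)
    (hg : ∀ r, R ≤ r → HasDerivAt g (g' r) r)
    (hg' : ∀ r, R ≤ r → HasDerivAt g' ((q r - 1) • g r) r)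
    (hq : ∀ r, R ≤ r → |q r| ≤ c / r ^ 2) {r : ℝ} (hr : R ≤ r) :
    ‖g r‖ ≤ Real.exp (c / R) * (‖g R‖ + ‖g' R‖) := by
  let energy : ℝ → ℝ := fun r => ‖g r‖ ^ 2 + ‖g' r‖ ^ 2
  have energy_deriv : ∀ r, R ≤ r → HasDerivAt energy (2 * q r * ⟪g r, g' r⟫) r := fun r hr => by
    refine ((hg r hr).norm_sq.add (hg' r hr).norm_sq).congr_deriv ?_
    rw [inner_smul_right, real_inner_comm (g r) (g' r)]
    ring
  have energy_deriv_le : ∀ r, R ≤ r → 2 * q r * ⟪g r, g' r⟫ ≤ c / r ^ 2 * energy r := fun r hr => by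
    have inner_le : 2 * |⟪g r, g' r⟫| ≤ energy r := by
      linarith [abs_real_inner_le_norm (g r) (g' r), two_mul_le_add_sq ‖g r‖ ‖g' r‖]
    calc 2 * q r * ⟪g r, g' r⟫ ≤ |2 * q r * ⟪g r, g' r⟫| := le_abs_self _
      _ = |q r| * (2 * |⟪g r, g' r⟫|) := by rw [abs_mul, abs_mul, abs_two]; ring
      _ ≤ c / r ^ 2 * energy r :=
        mul_le_mul (hq r hr) inner_le (by positivity) ((abs_nonneg _).trans (hq r hr))
  have hc : 0 ≤ c := by
    have := (abs_nonneg _).trans (hq R le_rfl)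
    rwa [le_div_iff₀ (by positivity), zero_mul] at this
  have hr0 : 0 < r := hR.trans_le hr
  refine le_of_sq_le_sq ?_ (by positivity)
  calc ‖g r‖ ^ 2 ≤ energy r := le_add_of_nonneg_right (sq_nonneg _)
    _ ≤ energy r * Real.exp (c / r) :=
      le_mul_of_one_le_right (by positivity) (Real.one_le_exp (by positivity))
    _ ≤ energy R * Real.exp (c / R) :=
      antitoneOn_mul_exp_div_of_deriv_le hR energy_deriv energy_deriv_le self_mem_Ici hr hr
    _ ≤ (‖g R‖ + ‖g' R‖) ^ 2 * Real.exp (c / R) ^ 2 := by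
      gcongr
      · nlinarith [norm_nonneg (g R), norm_nonneg (g' R)]
      · exact le_self_pow₀ (Real.one_le_exp (by positivity)) two_ne_zero
    _ = _ := by ring

theorem hasDerivAt_rpow_smul {u : ℝ → F} {u' : F} {r : ℝ} (hu : HasDerivAt u u' r) (hr : 0 < r)
    (β : ℝ) :
    HasDerivAt (fun r => r ^ β • u r) (r ^ β • u' + (β * r ^ (β - 1)) • u r) r :=
  (Real.hasDerivAt_rpow_const (.inl hr.ne')).smul hu

theorem hasDerivAt_deriv_rpow_smul_of_bessel {u v : ℝ → F} {w : F} {β r : ℝ} (hr : 0 < r)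
    (hu : HasDerivAt u (v r) r) (hv : HasDerivAt v w r)
    (hode : r • (u r + w) = -(2 * β) • v r) :
    HasDerivAt (fun r => r ^ β • v r + (β * r ^ (β - 1)) • u r)
      ((β * (β - 1) / r ^ 2 - 1) • r ^ β • u r) r := by
  have hw : w = -u r - (2 * β / r) • v r := by
    have : r⁻¹ • r • (u r + w) = r⁻¹ • -(2 * β) • v r := congrArg (r⁻¹ • ·) hode
    rw [inv_smul_smul₀ hr.ne'] at this
    rw [eq_sub_of_add_eq' this]
    module
  simp only [mul_smul]
  refine ((hasDerivAt_rpow_smul hv hr β).add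
    ((hasDerivAt_rpow_smul hu hr (β - 1)).const_smul β)).congr_deriv ?_
  simp only [hw, Real.rpow_sub_one hr.ne']
  match_scalars <;> field_simp <;> ring

theorem rpow_mul_norm_le_of_bessel {u v w : ℝ → F} {β S : ℝ} (hβ : 0 ≤ β)
    (hu : ∀ r, 0 < r → HasDerivAt u (v r) r) (hv : ∀ r, 0 < r → HasDerivAt v (w r) r)
    (hode : ∀ r, 0 < r → r • (u r + w r) = -(2 * β) • v r)
    (hub : ∀ r ∈ Ioc 0 1, ‖u r‖ ≤ S) (hvb : ‖v 1‖ ≤ S) {r : ℝ} (hr : 0 < r) :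
    r ^ β * ‖u r‖ ≤ Real.exp |β * (β - 1)| * (2 + β) * S := by
  have hu1 : ‖u 1‖ ≤ S := hub 1 (right_mem_Ioc.mpr one_pos)
  have hS : 0 ≤ S := (norm_nonneg _).trans hu1
  rcases le_total r 1 with hr1 | hr1
  · have hexp : 1 ≤ Real.exp |β * (β - 1)| := Real.one_le_exp (abs_nonneg _)
    calc r ^ β * ‖u r‖ ≤ 1 * S := by
          gcongr
          exacts [Real.rpow_le_one hr.le hr1 hβ, hub r ⟨hr, hr1⟩]
      _ ≤ _ := by gcongr; nlinarith
  -- `g = r ^ β u` removes the first-order term: `g'' = (β (β - 1) / r ^ 2 - 1) g`.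
  have hg := norm_le_exp_mul_of_perturbed_oscillator (q := fun r => β * (β - 1) / r ^ 2) one_pos
    (fun r hr => hasDerivAt_rpow_smul (hu r (by positivity)) (by positivity) β)
    (fun r hr => hasDerivAt_deriv_rpow_smul_of_bessel (by positivity) (hu r (by positivity))
      (hv r (by positivity)) (hode r (by positivity)))
    (fun r _ => (by rw [abs_div, abs_sq] : _ ≤ |β * (β - 1)| / r ^ 2)) hr1
  simp only [Real.one_rpow, one_smul, mul_one, div_one, norm_smul,
    Real.norm_of_nonneg (Real.rpow_nonneg hr.le β)] at hg
  have hderiv : ‖v 1 + β • u 1‖ ≤ S + β * S := by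
    refine (norm_add_le _ _).trans ?_
    rw [norm_smul, Real.norm_of_nonneg hβ]
    gcongr
  calc r ^ β * ‖u r‖ ≤ Real.exp |β * (β - 1)| * (‖u 1‖ + ‖v 1 + β • u 1‖) := hg
    _ ≤ Real.exp |β * (β - 1)| * (S + (S + β * S)) := by gcongr
    _ = _ := by ring

end Oscillator

section ParametricIntegral

variable {X G : Type*} [TopologicalSpace X] [CompactSpace X] [MeasurableSpace X]
  [OpensMeasurableSpace X] [NormedAddCommGroup G] [NormedSpace ℝ G]

theorem hasDerivAt_integral_of_continuous_deriv (μ : Measure X) [IsFiniteMeasure μ]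
    {f f' : ℝ → X → G} (hf : ∀ t, Continuous (f t)) (hf' : Continuous f'.uncurry)
    (hd : ∀ t x, HasDerivAt (f · x) (f' t x) t) (t : ℝ) :
    HasDerivAt (fun t => ∫ x, f t x ∂μ) (∫ x, f' t x ∂μ) t := by
  obtain ⟨C, hC⟩ := ((isCompact_closedBall t 1).prod isCompact_univ).exists_bound_of_continuousOn
    hf'.continuousOn
  have hint : ∀ g : X → G, Continuous g → Integrable g μ := fun g hg =>
    hg.integrable_of_hasCompactSupport (.of_compactSpace _)
  exact (hasDerivAt_integral_of_dominated_loc_of_deriv_le (bound := fun _ => C)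
    (closedBall_mem_nhds t one_pos) (.of_forall fun t => (hint _ (hf t)).aestronglyMeasurable)
    (hint _ (hf t)) (hint _ (hf'.uncurry_left t)).aestronglyMeasurable
    (.of_forall fun x s hs => hC (s, x) ⟨hs, mem_univ x⟩) (integrable_const C)
    (.of_forall fun x s _ => hd s x)).2

end ParametricIntegral

section FourierDecay

theorem pow_mul_norm_integral_exp_mul_le {N : ℕ} {f : ℝ → ℂ} (hf : ContDiff ℝ N f)
    (hc : HasCompactSupport f) (t : ℝ) :
    |t| ^ N * ‖∫ u, exp (I * (u * t : ℝ)) * f u‖ ≤ ∫ u, ‖iteratedDeriv N f u‖ := by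
  have hsupp : ∀ k, HasCompactSupport (iteratedDeriv k f) := fun k => by
    induction k with
    | zero => rwa [iteratedDeriv_zero]
    | succ k ih => rw [iteratedDeriv_succ]; exact ih.deriv
  have hint : ∀ k : ℕ, k ≤ (N : ℕ∞) → Integrable (iteratedDeriv k f) := fun k hk =>
    (hf.continuous_iteratedDeriv k (mod_cast hk)).integrable_of_hasCompactSupport (hsupp k)
  have hphase : 𝓕 f (-t / (2 * Real.pi)) = ∫ u, exp (I * (u * t : ℝ)) * f u := by
    rw [Real.fourier_real_eq_integral_exp_smul]
    congr with u
    rw [smul_eq_mul, mul_comm I]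
    congr 4
    field_simp
  have hderiv := congrFun (Real.fourier_iteratedDeriv (N := N) (mod_cast hf) hint le_rfl)
    (-t / (2 * Real.pi))
  rw [hphase] at hderiv
  calc |t| ^ N * ‖∫ u, exp (I * (u * t : ℝ)) * f u‖ =
        ‖𝓕 (iteratedDeriv N f) (-t / (2 * Real.pi))‖ := by
        rw [hderiv, norm_smul, norm_pow]
        congr 2
        simp
        field_simp
    _ ≤ ∫ u, ‖iteratedDeriv N f u‖ := by
        rw [Real.fourier_real_eq_integral_exp_smul]
        refine (norm_integral_le_integral_norm _).trans_eq ?_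
        simp only [norm_smul, norm_exp_ofReal_mul_I, one_mul]

end FourierDecay

section PolarCoordinates

variable {E G : Type*} [NormedAddCommGroup E] [NormedSpace ℝ E] [MeasurableSpace E] [BorelSpace E]
  [NormedAddCommGroup G] {μ : Measure E}

theorem integrable_comp_smul_sphere [FiniteDimensional ℝ E] [μ.IsAddHaarMeasure] {f : E → G}
    (hf : Integrable f μ) :
    Integrable (fun p : sphere (0 : E) 1 × Ioi (0 : ℝ) => f ((p.2 : ℝ) • (p.1 : E)))
      (μ.toSphere.prod (Measure.volumeIoiPow (finrank ℝ E - 1))) := by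
  rw [← μ.measurePreserving_homeomorphUnitSphereProd.integrable_comp_emb
    (Homeomorph.measurableEmbedding _)]
  simpa only [Function.comp_def, ← homeomorphUnitSphereProd_symm_apply_coe,
    Homeomorph.symm_apply_apply] using
    (integrableOn_iff_comap_subtypeVal (measurableSet_singleton (0 : E)).compl).mp hf.integrableOn

variable [NormedSpace ℝ G]

theorem integral_toSphere_comp_linearIsometryEquiv {T : E ≃ₗᵢ[ℝ] E} (hT : MeasurePreserving T μ μ)
    (f : E → G) :
    ∫ ω : sphere (0 : E) 1, f (T ω) ∂μ.toSphere = ∫ ω : sphere (0 : E) 1, f ω ∂μ.toSphere := by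
  let τ : sphere (0 : E) 1 ≃ₜ sphere (0 : E) 1 := T.toHomeomorph.subtype (by simp)
  have cone_image : ∀ s : Set (sphere (0 : E) 1),
      T '' (Ioo (0 : ℝ) 1 • (Subtype.val '' (τ ⁻¹' s))) = Ioo (0 : ℝ) 1 • (Subtype.val '' s) := by
    intro s
    have hτ : T '' (Subtype.val '' (τ ⁻¹' s)) = Subtype.val '' s := by
      nth_rw 2 [← image_preimage_eq s τ.surjective]
      simp only [image_image]
      rfl
    rw [← hτ]
    exact image_image2_distrib_right fun r x => map_smul T r x
  have hτ : MeasurePreserving τ μ.toSphere μ.toSphere := by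
    refine ⟨τ.continuous.measurable, Measure.ext fun s hs => ?_⟩
    rw [Measure.map_apply τ.continuous.measurable hs, Measure.toSphere_apply' _ hs,
      Measure.toSphere_apply' _ (τ.continuous.measurable hs), ← cone_image s,
      ← hT.measure_preimage_emb T.toHomeomorph.measurableEmbedding (T '' _),
      T.injective.preimage_image]
  exact hτ.integral_comp τ.measurableEmbedding fun ω => f ω

theorem integral_volumeIoiPow (n : ℕ) (g : ℝ → G) :
    ∫ r : Ioi (0 : ℝ), g r ∂(Measure.volumeIoiPow n) = ∫ r in Ioi (0 : ℝ), r ^ n • g r := by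
  simp only [Measure.volumeIoiPow, ENNReal.ofReal]
  rw [integral_withDensity_eq_integral_smul (measurable_subtype_coe.pow_const _).real_toNNReal,
    integral_subtype_comap measurableSet_Ioi fun r => Real.toNNReal (r ^ n) • g r]
  refine setIntegral_congr_fun measurableSet_Ioi fun r hr => ?_
  rw [NNReal.smul_def, Real.coe_toNNReal _ (pow_nonneg hr.out.le _)]

variable [FiniteDimensional ℝ E] [Nontrivial E] [μ.IsAddHaarMeasure]

theorem integral_comp_smul_sphere (f : E → G) :
    ∫ p : sphere (0 : E) 1 × Ioi (0 : ℝ), f ((p.2 : ℝ) • (p.1 : E))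
      ∂(μ.toSphere.prod (Measure.volumeIoiPow (finrank ℝ E - 1))) = ∫ x, f x ∂μ := by
  rw [← μ.measurePreserving_homeomorphUnitSphereProd.integral_comp
    (Homeomorph.measurableEmbedding _)]
  simp only [← homeomorphUnitSphereProd_symm_apply_coe, Homeomorph.symm_apply_apply]
  rw [integral_subtype_comap (measurableSet_singleton _).compl f, restrict_compl_singleton]

theorem integral_eq_integral_toSphere_integral_Ioi {f : E → G} (hf : Integrable f μ) :
    ∫ x, f x ∂μ = ∫ ω : sphere (0 : E) 1,
      (∫ r in Ioi (0 : ℝ), r ^ (finrank ℝ E - 1) • f (r • (ω : E))) ∂μ.toSphere := by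
  rw [← integral_comp_smul_sphere, integral_prod _ (integrable_comp_smul_sphere hf)]
  congr with ω
  exact integral_volumeIoiPow _ fun r => f (r • (ω : E))

theorem integral_eq_integral_Ioi_integral_toSphere {f : E → G} (hf : Integrable f μ) :
    ∫ x, f x ∂μ = ∫ r in Ioi (0 : ℝ), r ^ (finrank ℝ E - 1) •
      ∫ ω : sphere (0 : E) 1, f (r • (ω : E)) ∂μ.toSphere := by
  rw [← integral_comp_smul_sphere, integral_prod_symm _ (integrable_comp_smul_sphere hf)]
  exact integral_volumeIoiPow _ fun r => ∫ ω : sphere (0 : E) 1, f (r • (ω : E)) ∂μ.toSphere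

end PolarCoordinates

section Sphere

variable {E : Type*} [NormedAddCommGroup E] [InnerProductSpace ℝ E] [FiniteDimensional ℝ E]

theorem exists_orthonormalBasis_zero_eq {n : ℕ} (hn : finrank ℝ E = n + 1) {e : E} (he : ‖e‖ = 1) :
    ∃ b : OrthonormalBasis (Fin (n + 1)) ℝ E, b 0 = e := by
  obtain ⟨b, hb⟩ := Orthonormal.exists_orthonormalBasis_extension_of_card_eq (𝕜 := ℝ)
    (ι := Fin (n + 1)) (by simpa using hn) (v := fun _ => e) (s := {0})
    ⟨fun _ => he, fun i j hij => absurd (Subsingleton.elim i j) hij⟩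
  exact ⟨b, hb 0 rfl⟩

variable [MeasurableSpace E] [BorelSpace E]

/-- The Fourier transform of the surface measure of the unit sphere, normalised without the factor
`-2π` in the phase. -/
noncomputable def sphereFourier (y : E) : ℂ :=
  ∫ ω : sphere (0 : E) 1, exp (I * (⟪y, ω⟫ : ℝ)) ∂volume.toSphere

/-- The `k`-th derivative of `r ↦ sphereFourier (r • e)`. -/
noncomputable def sphereFourierDeriv (k : ℕ) (e : E) (r : ℝ) : ℂ :=
  ∫ ω : sphere (0 : E) 1, (I * ⟪e, ω⟫) ^ k * exp (I * (r * ⟪e, ω⟫)) ∂volume.toSphere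

theorem sphereFourierDeriv_zero (e : E) (r : ℝ) :
    sphereFourierDeriv 0 e r = sphereFourier (r • e) := by
  simp only [sphereFourierDeriv, sphereFourier, pow_zero, one_mul, real_inner_smul_left, ofReal_mul]

theorem hasDerivAt_sphereFourierDeriv (k : ℕ) (e : E) (r : ℝ) :
    HasDerivAt (sphereFourierDeriv k e) (sphereFourierDeriv (k + 1) e r) r := by
  refine hasDerivAt_integral_of_continuous_deriv _
    (f := fun r (ω : sphere (0 : E) 1) => (I * ⟪e, ω⟫) ^ k * exp (I * (r * ⟪e, ω⟫)))
    (f' := fun r (ω : sphere (0 : E) 1) => (I * ⟪e, ω⟫) ^ (k + 1) * exp (I * (r * ⟪e, ω⟫)))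
    (fun r => by fun_prop) (by simp only [Function.uncurry_def]; fun_prop) (fun r ω => ?_) r
  refine (((ofRealCLM.hasDerivAt.mul_const _).const_mul I).cexp.const_mul _).congr_deriv ?_
  simp only [ofRealCLM_apply, ofReal_one]
  ring

theorem norm_sphereFourierDeriv_le (k : ℕ) {e : E} (he : ‖e‖ = 1) (r : ℝ) :
    ‖sphereFourierDeriv k e r‖ ≤ (volume : Measure E).toSphere.real univ := by
  rw [← one_mul (Measure.real _ _)]
  refine norm_integral_le_of_norm_le_const (.of_forall fun ω => ?_)
  have hω : |⟪e, (ω : E)⟫| ≤ 1 := by simpa [he] using abs_real_inner_le_norm e (ω : E)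
  rw [norm_mul, norm_pow, norm_mul, norm_I, one_mul, ← ofReal_mul, norm_exp_I_mul_ofReal, mul_one,
    norm_real]
  exact pow_le_one₀ (abs_nonneg _) hω

theorem integral_inner_mul_exp_inner_eq_zero {y z : E} (hyz : ⟪y, z⟫ = 0) :
    ∫ ω : sphere (0 : E) 1, (⟪z, ω⟫ : ℂ) * exp (I * ⟪y, ω⟫) ∂volume.toSphere = 0 := by
  -- This reflection fixes `y` and changes the sign of `⟪z, ω⟫`.
  let T : E ≃ₗᵢ[ℝ] E := (ℝ ∙ z)ᗮ.reflection
  have hTz : T z = -z := Submodule.reflection_orthogonalComplement_singleton_eq_neg z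
  have hTy : T y = y := Submodule.reflection_mem_subspace_eq_self <|
    Submodule.mem_orthogonal_singleton_iff_inner_left.mpr hyz
  have inner_T : ∀ x ω : E, ⟪x, T ω⟫ = ⟪T x, ω⟫ := fun x ω => by
    rw [← T.inner_map_map, Submodule.reflection_reflection]
  have := integral_toSphere_comp_linearIsometryEquiv T.measurePreserving
    fun ω => (⟪z, ω⟫ : ℂ) * exp (I * ⟪y, ω⟫)
  simpa only [inner_T, hTz, hTy, inner_neg_left, ofReal_neg, neg_mul, integral_neg,
    neg_eq_self] using this

theorem mul_integral_inner_sq_mul_exp_inner {e f : E} (hnorm : ‖e‖ = ‖f‖) (hef : ⟪e, f⟫ = 0)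
    (r : ℝ) :
    r * ∫ ω : sphere (0 : E) 1, (I * ⟪f, ω⟫) ^ 2 * exp (I * (r * ⟪e, ω⟫)) ∂volume.toSphere =
      sphereFourierDeriv 1 e r := by
  -- Differentiate at `t = 0` the vanishing integral for `y = r e + t f` and `z = r f - t e`.
  have hzero : ∀ t : ℝ, ∫ ω : sphere (0 : E) 1, (r * ⟪f, ω⟫ - t * ⟪e, ω⟫ : ℂ) *
      exp (I * (r * ⟪e, ω⟫ + t * ⟪f, ω⟫)) ∂volume.toSphere = 0 := fun t => by
    have horth : ⟪r • e + t • f, r • f - t • e⟫ = 0 := by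
      simp only [inner_add_left, inner_sub_right, real_inner_smul_left, real_inner_smul_right, hef,
        real_inner_comm e f, real_inner_self_eq_norm_sq, hnorm]
      ring
    simpa [inner_add_left, inner_sub_left, real_inner_smul_left] using
      integral_inner_mul_exp_inner_eq_zero horth
  have hderiv := hasDerivAt_integral_of_continuous_deriv (volume : Measure E).toSphere
    (f := fun t ω => (r * ⟪f, ω⟫ - t * ⟪e, ω⟫ : ℂ) * exp (I * (r * ⟪e, ω⟫ + t * ⟪f, ω⟫)))
    (f' := fun t ω => (-⟪e, ω⟫ + (r * ⟪f, ω⟫ - t * ⟪e, ω⟫) * (I * ⟪f, ω⟫) : ℂ) *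
      exp (I * (r * ⟪e, ω⟫ + t * ⟪f, ω⟫)))
    (fun t => by fun_prop) (by simp only [Function.uncurry_def]; fun_prop) (fun t ω => by
      have h := (ofRealCLM.hasDerivAt (x := t))
      refine (((h.mul_const _).const_sub _).mul
        (((h.mul_const _).const_add _).const_mul I).cexp).congr_deriv ?_
      simp only [ofRealCLM_apply, ofReal_one]
      ring) 0
  simp only [hzero] at hderiv
  have hI := hderiv.unique (hasDerivAt_const _ _)
  have hint : ∀ g : sphere (0 : E) 1 → ℂ, Continuous g →
      Integrable g (volume : Measure E).toSphere := fun g hg =>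
    hg.integrable_of_hasCompactSupport (.of_compactSpace _)
  rw [sphereFourierDeriv, ← sub_eq_zero, ← integral_const_mul,
    ← integral_sub (hint _ (by fun_prop)) (hint _ (by fun_prop)), ← mul_zero I, ← hI,
    ← integral_const_mul]
  congr with ω
  simp
  ring

theorem sphereFourierDeriv_bessel {n : ℕ} (hn : finrank ℝ E = n + 1) {e : E} (he : ‖e‖ = 1)
    (r : ℝ) :
    r * (sphereFourierDeriv 0 e r + sphereFourierDeriv 2 e r) =
      -n * sphereFourierDeriv 1 e r := by
  obtain ⟨b, hb⟩ := exists_orthonormalBasis_zero_eq hn he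
  have hsum : ∑ j, ∫ ω : sphere (0 : E) 1, (I * ⟪b j, ω⟫) ^ 2 * exp (I * (r * ⟪e, ω⟫))
      ∂volume.toSphere = -sphereFourierDeriv 0 e r := by
    rw [← integral_finsetSum _ fun j _ =>
      Continuous.integrable_of_hasCompactSupport (by fun_prop) (.of_compactSpace _),
      sphereFourierDeriv, ← integral_neg]
    congr with ω
    have hω : ∑ j, (⟪b j, (ω : E)⟫ : ℂ) ^ 2 = 1 := by
      simpa using congrArg ofReal (b.sum_sq_inner_right (ω : E))
    simp [← Finset.sum_mul, mul_pow, hω]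
  have htail : ∀ j : Fin n, r * ∫ ω : sphere (0 : E) 1, (I * ⟪b j.succ, ω⟫) ^ 2 *
      exp (I * (r * ⟪e, ω⟫)) ∂volume.toSphere = sphereFourierDeriv 1 e r := fun j =>
    mul_integral_inner_sq_mul_exp_inner (by simp [he])
      (by rw [← hb]; exact b.orthonormal.2 (Fin.succ_ne_zero j).symm) r
  rw [Fin.sum_univ_succ, hb] at hsum
  have := congrArg ((r : ℂ) * ·) hsum
  simp only [mul_add, Finset.mul_sum, htail, Finset.sum_const, Finset.card_univ, Fintype.card_fin,
    nsmul_eq_mul] at this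
  rw [sphereFourierDeriv.eq_def 2]
  linear_combination this

theorem exists_rpow_mul_norm_sphereFourier_le {n : ℕ} (hn : finrank ℝ E = n + 1) :
    ∃ C, ∀ y : E, y ≠ 0 → ‖y‖ ^ ((n : ℝ) / 2) * ‖sphereFourier y‖ ≤ C := by
  refine ⟨Real.exp |(n : ℝ) / 2 * (n / 2 - 1)| * (2 + n / 2) *
    (volume : Measure E).toSphere.real univ, fun y hy => ?_⟩
  let e : E := ‖y‖⁻¹ • y
  have he : ‖e‖ = 1 := norm_smul_inv_norm hy
  have hye : ‖y‖ • e = y := smul_inv_smul₀ (norm_ne_zero_iff.mpr hy) y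
  rw [← congrArg sphereFourier hye, ← sphereFourierDeriv_zero]
  refine rpow_mul_norm_le_of_bessel (by positivity)
    (fun r _ => hasDerivAt_sphereFourierDeriv 0 e r)
    (fun r _ => hasDerivAt_sphereFourierDeriv 1 e r) (fun r _ => ?_)
    (fun r _ => norm_sphereFourierDeriv_le 0 he r) (norm_sphereFourierDeriv_le 1 he 1)
    (norm_pos_iff.mpr hy)
  simp only [real_smul, zero_add, Nat.reduceAdd, sphereFourierDeriv_bessel hn he]
  push_cast
  ring

end Sphere

section Radial

theorem integral_comp_mul_sub {G : Type*} [NormedAddCommGroup G] [NormedSpace ℝ G] (g : ℝ → G)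
    {a : ℝ} (ha : 0 < a) (b : ℝ) : ∫ x, g (a * x - b) = a⁻¹ • ∫ x, g x := by
  rw [Measure.integral_comp_mul_left (fun x => g (x - b)), integral_sub_right_eq_self,
    abs_of_pos (inv_pos.mpr ha)]

theorem exists_pow_mul_norm_integral_exp_mul_one_add_pow_mul_le {N : ℕ} {ζ : ℝ → ℂ}
    (hζ : ContDiff ℝ N ζ) (hsupp : HasCompactSupport ζ) (n : ℕ) (δ : ℝ) :
    ∃ C, ∀ ε : ℝ, |ε| ≤ δ → ∀ t : ℝ,
      |t| ^ N * ‖∫ u, exp (I * (u * t : ℝ)) * ((1 + ε * u) ^ n * ζ u)‖ ≤ C := by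
  let f : ℕ → ℝ → ℂ := fun k u => u ^ k * ζ u
  have hf : ∀ k, ContDiff ℝ N (f k) := fun k => (ofRealCLM.contDiff.pow k).mul hζ
  have hfsupp : ∀ k, HasCompactSupport (f k) := fun k => hsupp.mul_left
  refine ⟨∑ k ∈ Finset.range (n + 1), δ ^ k * n.choose k * ∫ u, ‖iteratedDeriv N (f k) u‖,
    fun ε hε t => ?_⟩
  have hδ : 0 ≤ δ := (abs_nonneg ε).trans hε
  have hint : ∀ k, Integrable fun u : ℝ => exp (I * (u * t : ℝ)) * f k u := fun k =>
    Continuous.integrable_of_hasCompactSupport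
      ((by fun_prop : Continuous fun u : ℝ => exp (I * (u * t : ℝ))).mul (hf k).continuous)
      (hfsupp k).mul_left
  have hexpand : ∫ u, exp (I * (u * t : ℝ)) * ((1 + ε * u) ^ n * ζ u) =
      ∑ k ∈ Finset.range (n + 1), (ε ^ k * n.choose k : ℂ) *
        ∫ u, exp (I * (u * t : ℝ)) * f k u := by
    simp only [← integral_const_mul]
    rw [← integral_finsetSum _ fun k _ => (hint k).const_mul _]
    congr with u
    rw [add_comm, add_pow, Finset.sum_mul, Finset.mul_sum]
    refine Finset.sum_congr rfl fun k _ => ?_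
    simp only [f]
    ring
  rw [hexpand]
  calc _ ≤ |t| ^ N * ∑ k ∈ Finset.range (n + 1), ‖(ε ^ k * n.choose k : ℂ) *
        ∫ u, exp (I * (u * t : ℝ)) * f k u‖ := by gcongr; exact norm_sum_le _ _
    _ = ∑ k ∈ Finset.range (n + 1), |ε| ^ k * n.choose k *
        (|t| ^ N * ‖∫ u, exp (I * (u * t : ℝ)) * f k u‖) := by
      rw [Finset.mul_sum]
      refine Finset.sum_congr rfl fun k _ => ?_
      simp only [norm_mul, norm_pow, norm_real, norm_natCast, Real.norm_eq_abs]
      ring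
    _ ≤ _ := by
      gcongr
      exact pow_mul_norm_integral_exp_mul_le (hf _) (hfsupp _) t

/-- The integral along a ray of the half-wave integrand in polar coordinates, where the phase
`s ‖ξ‖ + ⟪y, ξ⟫` has slope `A`. -/
noncomputable def radialKernel (n : ℕ) (ζ : ℝ → ℂ) (lam A : ℝ) : ℂ :=
  ∫ r in Ioi (0 : ℝ), r ^ n • (exp (I * (r * A : ℝ)) * ζ (lam * r - lam))

theorem radialKernel_eq {ζ : ℝ → ℂ} {lam : ℝ} (hlam : 0 < lam) (hζ : ∀ u < -lam, ζ u = 0)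
    (n : ℕ) (A : ℝ) :
    radialKernel n ζ lam A = lam⁻¹ * exp (I * A) *
      ∫ u, exp (I * (u * (A / lam) : ℝ)) * ((1 + (lam⁻¹ : ℝ) * u) ^ n * ζ u) := by
  -- `g` is the integrand after the substitution `r = 1 + u / lam`.
  let g : ℝ → ℂ := fun u =>
    exp (I * A) * (exp (I * (u * (A / lam) : ℝ)) * ((1 + (lam⁻¹ : ℝ) * u) ^ n * ζ u))
  have hg : ∀ r : ℝ, r ^ n • (exp (I * (r * A : ℝ)) * ζ (lam * r - lam)) = g (lam * r - lam) :=
    fun r => by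
      have hr : (1 + (lam⁻¹ : ℝ) * (lam * r - lam : ℝ) : ℂ) = r := by
        push_cast
        field_simp [ofReal_ne_zero.mpr hlam.ne']
        ring
      have hexp : exp (I * A) * exp (I * ((lam * r - lam) * (A / lam) : ℝ)) =
          exp (I * (r * A : ℝ)) := by
        rw [← exp_add]
        congr 1
        push_cast
        field_simp [ofReal_ne_zero.mpr hlam.ne']
        ring
      simp only [g]
      rw [hr, ← mul_assoc, hexp, real_smul, ofReal_pow]
      ring
  have hvanish : ∀ r ∉ Ici (0 : ℝ), g (lam * r - lam) = 0 := fun r hr => by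
    have : lam * r - lam < -lam := by nlinarith [notMem_Ici.mp hr]
    simp only [g, hζ _ this, mul_zero]
  calc radialKernel n ζ lam A = ∫ r in Ioi (0 : ℝ), g (lam * r - lam) := by
        simp only [radialKernel, hg]
    _ = ∫ r, g (lam * r - lam) := by
        rw [← integral_Ici_eq_integral_Ioi,
          setIntegral_eq_integral_of_forall_compl_eq_zero hvanish]
    _ = _ := by
        rw [integral_comp_mul_sub g hlam, integral_const_mul, real_smul, ofReal_inv, mul_assoc]

variable {ζ : ℝ → ℂ} {κ : ℝ}

theorem hasCompactSupport_of_eq_zero_of_lt_abs (hζ : ∀ u, κ < |u| → ζ u = 0) :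
    HasCompactSupport ζ :=
  .intro (isCompact_Icc (a := -κ) (b := κ)) fun u hu => hζ u <| by
    rwa [mem_Icc, ← abs_le, not_le] at hu

theorem exists_pow_mul_norm_radialKernel_le {N : ℕ} (hκ : 0 < κ) (hζ : ContDiff ℝ N ζ)
    (hζ_zero : ∀ u, κ < |u| → ζ u = 0) (n : ℕ) :
    ∃ C, ∀ lam : ℝ, κ ≤ lam → ∀ A : ℝ,
      |A / lam| ^ N * ‖radialKernel n ζ lam A‖ ≤ C * lam⁻¹ := by
  obtain ⟨C, hC⟩ := exists_pow_mul_norm_integral_exp_mul_one_add_pow_mul_le hζ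
    (hasCompactSupport_of_eq_zero_of_lt_abs hζ_zero) n κ⁻¹
  refine ⟨C, fun lam hlam A => ?_⟩
  have hlam0 : 0 < lam := hκ.trans_le hlam
  have hε : |lam⁻¹| ≤ κ⁻¹ := by
    rw [abs_of_pos (inv_pos.mpr hlam0)]
    exact inv_anti₀ hκ hlam
  have hζ_left : ∀ u < -lam, ζ u = 0 := fun u hu =>
    hζ_zero u (lt_abs.mpr (.inr (by linarith)))
  rw [radialKernel_eq hlam0 hζ_left, norm_mul, norm_mul, norm_exp_I_mul_ofReal, mul_one,
    norm_real, Real.norm_of_nonneg (inv_pos.mpr hlam0).le, mul_left_comm, mul_comm C]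
  gcongr
  exact hC _ hε _

end Radial

section Kernel

variable {E : Type*} [NormedAddCommGroup E] [InnerProductSpace ℝ E] {ζ : ℝ → ℂ} {κ lam : ℝ} {n : ℕ}

theorem halfwave_integrand_smul_sphere (ζ : ℝ → ℂ) (lam s : ℝ) (y : E) {r : ℝ} (hr : 0 ≤ r)
    (ω : sphere (0 : E) 1) :
    exp (I * (s * ‖r • (ω : E)‖ + ⟪y, r • (ω : E)⟫ : ℝ)) * ζ (lam * ‖r • (ω : E)‖ - lam) =
      exp (I * (r * (s + ⟪y, ω⟫) : ℝ)) * ζ (lam * r - lam) := by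
  rw [norm_smul, norm_eq_of_mem_sphere, mul_one, Real.norm_of_nonneg hr, real_inner_smul_right,
    mul_add, mul_comm s]

variable [FiniteDimensional ℝ E] [MeasurableSpace E] [BorelSpace E]

/-- The rescaled half-wave kernel `K_{κ/λ,1}(s, y)` with cutoff profile `ζ`. -/
noncomputable def halfwaveKernel (ζ : ℝ → ℂ) (lam s : ℝ) (y : E) : ℂ :=
  ∫ ξ : E, exp (I * (s * ‖ξ‖ + ⟪y, ξ⟫ : ℝ)) * ζ (lam * ‖ξ‖ - lam)

theorem integrable_halfwave_integrand (hζ : Continuous ζ) (hζ_zero : ∀ u, κ < |u| → ζ u = 0)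
    (hκ : 0 < κ) (hlam : κ ≤ lam) (s : ℝ) (y : E) :
    Integrable fun ξ : E => exp (I * (s * ‖ξ‖ + ⟪y, ξ⟫ : ℝ)) * ζ (lam * ‖ξ‖ - lam) := by
  refine Continuous.integrable_of_hasCompactSupport (by fun_prop)
    (.intro (isCompact_closedBall (0 : E) 2) fun ξ hξ => ?_)
  rw [mem_closedBall_zero_iff, not_le] at hξ
  rw [hζ_zero _ (lt_abs.mpr (.inl (by nlinarith))), mul_zero]

theorem halfwaveKernel_eq_integral_radialKernel (hn : finrank ℝ E = n + 1) (hζ : Continuous ζ)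
    (hζ_zero : ∀ u, κ < |u| → ζ u = 0) (hκ : 0 < κ) (hlam : κ ≤ lam) (s : ℝ) (y : E) :
    halfwaveKernel ζ lam s y =
      ∫ ω : sphere (0 : E) 1, radialKernel n ζ lam (s + ⟪y, ω⟫) ∂volume.toSphere := by
  have : Nontrivial E := Module.nontrivial_of_finrank_eq_succ hn
  rw [halfwaveKernel, integral_eq_integral_toSphere_integral_Ioi
    (integrable_halfwave_integrand hζ hζ_zero hκ hlam s y), hn, Nat.add_sub_cancel]
  congr with ω
  refine setIntegral_congr_fun measurableSet_Ioi fun r hr => ?_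
  simp only [halfwave_integrand_smul_sphere ζ lam s y hr.le]

theorem halfwaveKernel_eq_integral_sphereFourier (hn : finrank ℝ E = n + 1) (hζ : Continuous ζ)
    (hζ_zero : ∀ u, κ < |u| → ζ u = 0) (hκ : 0 < κ) (hlam : κ ≤ lam) (s : ℝ) (y : E) :
    halfwaveKernel ζ lam s y = ∫ r in Ioi (0 : ℝ),
      r ^ n • (exp (I * (r * s : ℝ)) * ζ (lam * r - lam) * sphereFourier (r • y)) := by
  have : Nontrivial E := Module.nontrivial_of_finrank_eq_succ hn
  rw [halfwaveKernel, integral_eq_integral_Ioi_integral_toSphere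
    (integrable_halfwave_integrand hζ hζ_zero hκ hlam s y), hn, Nat.add_sub_cancel]
  refine setIntegral_congr_fun measurableSet_Ioi fun r hr => ?_
  simp only [halfwave_integrand_smul_sphere ζ lam s y hr.le, sphereFourier]
  rw [← integral_const_mul]
  congr with ω
  rw [mul_add, ofReal_add, mul_add, exp_add, real_inner_smul_left]
  ring

theorem exists_norm_halfwaveKernel_le_of_norm_le (hn : finrank ℝ E = n + 1) (hκ : 0 < κ)
    (hζ : ContDiff ℝ n ζ) (hζ_zero : ∀ u, κ < |u| → ζ u = 0) :
    ∃ C, ∀ lam, κ ≤ lam → ∀ s, 0 < s → ∀ y : E, ‖y‖ ≤ s / 2 →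
      ‖halfwaveKernel ζ lam s y‖ ≤ C * (lam⁻¹ * (s / lam) ^ (-(n : ℝ))) := by
  obtain ⟨C, hC⟩ := exists_pow_mul_norm_radialKernel_le hκ hζ hζ_zero n
  refine ⟨2 ^ n * C * (volume : Measure E).toSphere.real univ, fun lam hlam s hs y hy => ?_⟩
  have hlam0 : 0 < lam := hκ.trans_le hlam
  have hradial : ∀ ω : sphere (0 : E) 1, ‖radialKernel n ζ lam (s + ⟪y, ω⟫)‖ ≤
      2 ^ n * C * (lam⁻¹ * (s / lam) ^ (-(n : ℝ))) := fun ω => by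
    have hinner : |⟪y, (ω : E)⟫| ≤ ‖y‖ := by simpa using abs_real_inner_le_norm y (ω : E)
    have hslope : s / 2 ≤ s + ⟪y, (ω : E)⟫ := by linarith [neg_abs_le ⟪y, (ω : E)⟫]
    have hdecay : (s / 2 / lam) ^ n * ‖radialKernel n ζ lam (s + ⟪y, ω⟫)‖ ≤ C * lam⁻¹ := by
      refine le_trans ?_ (hC lam hlam (s + ⟪y, ω⟫))
      gcongr
      exact le_abs.mpr (.inl (by gcongr))
    rw [Real.rpow_neg (by positivity), Real.rpow_natCast]
    calc _ ≤ C * lam⁻¹ / (s / 2 / lam) ^ n := (le_div_iff₀' (by positivity)).mpr hdecay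
      _ = _ := by rw [div_right_comm, div_pow (s / lam)]; field_simp
  rw [halfwaveKernel_eq_integral_radialKernel hn hζ.continuous hζ_zero hκ hlam, mul_right_comm]
  exact norm_integral_le_of_norm_le_const (.of_forall hradial)

theorem exists_pow_mul_norm_sphereFourier_smul_le (hn : finrank ℝ E = n + 1) :
    ∃ C, ∀ s, 0 < s → ∀ y : E, s / 2 ≤ ‖y‖ → ∀ r ∈ Ioc (0 : ℝ) 2,
      r ^ n * ‖sphereFourier (r • y)‖ ≤ C * s ^ (-(n : ℝ) / 2) := by
  obtain ⟨C, hC⟩ := exists_rpow_mul_norm_sphereFourier_le hn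
  refine ⟨2 ^ n * C, fun s hs y hy r ⟨hr0, hr2⟩ => ?_⟩
  have hy0 : 0 < ‖y‖ := by linarith
  have hpow : ∀ x : ℝ, 0 < x → x ^ n = x ^ ((n : ℝ) / 2) * x ^ ((n : ℝ) / 2) := fun x hx => by
    rw [← Real.rpow_add hx, add_halves, Real.rpow_natCast]
  have hdecay := hC (r • y) (smul_ne_zero hr0.ne' (norm_pos_iff.mp hy0))
  rw [norm_smul, Real.norm_of_nonneg hr0.le, Real.mul_rpow hr0.le hy0.le] at hdecay
  rw [neg_div, Real.rpow_neg hs.le, ← div_eq_mul_inv, le_div_iff₀' (by positivity)]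
  calc s ^ ((n : ℝ) / 2) * (r ^ n * ‖sphereFourier (r • y)‖)
      ≤ (2 * ‖y‖) ^ ((n : ℝ) / 2) *
        (2 ^ ((n : ℝ) / 2) * r ^ ((n : ℝ) / 2) * ‖sphereFourier (r • y)‖) := by
        rw [hpow r hr0]
        gcongr
        linarith
    _ = 2 ^ n * (r ^ ((n : ℝ) / 2) * ‖y‖ ^ ((n : ℝ) / 2) * ‖sphereFourier (r • y)‖) := by
        rw [hpow 2 two_pos, Real.mul_rpow two_pos.le hy0.le]
        ring
    _ ≤ 2 ^ n * C := by gcongr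

theorem exists_norm_halfwaveKernel_le_of_le_norm (hn : finrank ℝ E = n + 1) (hκ : 0 < κ)
    (hζ : Continuous ζ) (hζ_zero : ∀ u, κ < |u| → ζ u = 0) :
    ∃ C, ∀ lam, κ ≤ lam → ∀ s, 0 < s → ∀ y : E, s / 2 ≤ ‖y‖ →
      ‖halfwaveKernel ζ lam s y‖ ≤ C * (lam⁻¹ * s ^ (-(n : ℝ) / 2)) := by
  obtain ⟨C, hC⟩ := exists_pow_mul_norm_sphereFourier_smul_le hn
  refine ⟨C * ∫ u, ‖ζ u‖, fun lam hlam s hs y hy => ?_⟩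
  have hlam0 : 0 < lam := hκ.trans_le hlam
  have hbound_nonneg : 0 ≤ C * s ^ (-(n : ℝ) / 2) :=
    le_trans (by positivity) (hC s hs y hy 2 (right_mem_Ioc.mpr two_pos))
  have hζint : Integrable fun r => ‖ζ (lam * r - lam)‖ :=
    (((hζ.integrable_of_hasCompactSupport
      (hasCompactSupport_of_eq_zero_of_lt_abs hζ_zero)).comp_sub_right lam).comp_mul_left'
      hlam0.ne').norm
  have hintegrand : ∀ r ∈ Ioi (0 : ℝ),
      ‖r ^ n • (exp (I * (r * s : ℝ)) * ζ (lam * r - lam) * sphereFourier (r • y))‖ ≤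
        C * s ^ (-(n : ℝ) / 2) * ‖ζ (lam * r - lam)‖ := fun r (hr : 0 < r) => by
    rw [norm_smul, norm_mul, norm_mul, norm_exp_I_mul_ofReal, one_mul, norm_pow,
      Real.norm_of_nonneg hr.le, mul_left_comm, mul_comm ‖ζ _‖]
    rcases le_or_gt r 2 with hr2 | hr2
    · exact mul_le_mul_of_nonneg_right (hC s hs y hy r ⟨hr, hr2⟩) (norm_nonneg _)
    · simp [hζ_zero (lam * r - lam) (lt_abs.mpr (.inl (by nlinarith)))]
  calc ‖halfwaveKernel ζ lam s y‖
      ≤ ∫ r in Ioi (0 : ℝ), C * s ^ (-(n : ℝ) / 2) * ‖ζ (lam * r - lam)‖ := by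
        rw [halfwaveKernel_eq_integral_sphereFourier hn hζ hζ_zero hκ hlam]
        exact norm_integral_le_of_norm_le (hζint.const_mul _).integrableOn
          ((ae_restrict_iff' measurableSet_Ioi).mpr (.of_forall hintegrand))
    _ ≤ ∫ r, C * s ^ (-(n : ℝ) / 2) * ‖ζ (lam * r - lam)‖ :=
        setIntegral_le_integral (hζint.const_mul _) (.of_forall fun r =>
          mul_nonneg hbound_nonneg (norm_nonneg _))
    _ = _ := by
        rw [integral_const_mul, integral_comp_mul_sub (fun u => ‖ζ u‖) hlam0, smul_eq_mul]
        ring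

end Kernel

end HalfWave

theorem halfwave_rescaled_kernel_decay_general {E : Type*} [NormedAddCommGroup E]
    [InnerProductSpace ℝ E] [FiniteDimensional ℝ E] [MeasurableSpace E] [BorelSpace E] {n : ℕ}
    (hn : Module.finrank ℝ E = n + 1) {κ : ℝ} (hκ : 0 < κ) {ζ : ℝ → ℂ} (hζ : ContDiff ℝ n ζ)
    (hζ_zero : ∀ u, κ < |u| → ζ u = 0) :
    ∃ C > 0, ∀ s : ℝ, 0 < s → ∀ lam : ℝ, κ ≤ lam → ∀ y : E,
      ‖∫ ξ : E, exp (I * (s * ‖ξ‖ + ⟪y, ξ⟫ : ℝ)) * ζ (lam * ‖ξ‖ - lam)‖ ≤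
        C * (lam⁻¹ * s ^ (-(n : ℝ) / 2) + lam⁻¹ * (s / lam) ^ (-(n : ℝ))) := by
  obtain ⟨C₁, hC₁⟩ :=
    HalfWave.exists_norm_halfwaveKernel_le_of_le_norm hn hκ hζ.continuous hζ_zero
  obtain ⟨C₂, hC₂⟩ :=
    HalfWave.exists_norm_halfwaveKernel_le_of_norm_le hn hκ hζ hζ_zero
  refine ⟨max 1 (max C₁ C₂), lt_max_of_lt_left one_pos, fun s hs lam hlam y => ?_⟩
  have hlam0 : 0 < lam := hκ.trans_le hlam
  rw [mul_add]
  rcases le_total (s / 2) ‖y‖ with hy | hy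
  · refine le_add_of_le_of_nonneg ((hC₁ lam hlam s hs y hy).trans ?_) (by positivity)
    gcongr
    exact (le_max_left _ _).trans (le_max_right _ _)
  · refine le_add_of_nonneg_of_le (by positivity) ((hC₂ lam hlam s hs y hy).trans ?_)
    gcongr
    exact (le_max_right _ _).trans (le_max_right _ _)

/-- Bound on the rescaled half-wave kernel `K_{κ/λ,1}(s,y) = ∫ e^{i(s|ξ|+y·ξ)} ζ̃_{κ,λ}(λξ) dξ`:
`sup_y |K_{κ/λ,1}(s,y)| ≤ C (λ⁻¹ s^{−(d−1)/2} + λ⁻¹ (s/λ)^{−(d−1)})` for `s > 0`, `λ ≥ κ + 1`. -/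
theorem halfwave_rescaled_kernel_decay (d : ℕ) (hd : 2 ≤ d) (κ : ℝ) (hκ : 1 ≤ κ)
    (ζt : ℝ → ℝ) (hζ_smooth : ContDiff ℝ (⊤ : ℕ∞) ζt) (hζ_nonneg : ∀ s, 0 ≤ ζt s)
    (hζ_one : ∀ s : ℝ, |s| ≤ 3 / 4 * κ → ζt s = 1)
    (hζ_zero : ∀ s : ℝ, κ < |s| → ζt s = 0) :
    ∃ C > 0, ∀ s : ℝ, 0 < s → ∀ lam : ℕ, κ + 1 ≤ (lam : ℝ) →
      ∀ y : EuclideanSpace ℝ (Fin d),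
        ‖∫ ξ : EuclideanSpace ℝ (Fin d),
            Complex.exp (Complex.I * ((s * ‖ξ‖ + ⟪y, ξ⟫ : ℝ) : ℂ)) *
              ((ζt ((lam : ℝ) * ‖ξ‖ - lam) : ℝ) : ℂ)‖
          ≤ C * ((lam : ℝ)⁻¹ * s ^ (-((d : ℝ) - 1) / 2)
              + (lam : ℝ)⁻¹ * (s / lam) ^ (-((d : ℝ) - 1))) := by
  obtain ⟨n, rfl⟩ : ∃ n, d = n + 1 := ⟨d - 1, by omega⟩
  obtain ⟨C, hC, hbound⟩ := halfwave_rescaled_kernel_decay_general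
    (E := EuclideanSpace ℝ (Fin (n + 1))) finrank_euclideanSpace_fin (one_pos.trans_le hκ)
    (ofRealCLM.contDiff.comp (hζ_smooth.of_le (mod_cast le_top)))
    (fun u hu => congrArg ofReal (hζ_zero u hu))
  refine ⟨C, hC, fun s hs lam hlam y => ?_⟩
  simpa using hbound s hs lam (by linarith) y
end

section
/- Let d ≥ 2 and κ ≥ 1, and for λ ∈ ℕ define K_{κ/λ,1}(s,y) = ∫_{ℝ^d} e^{i(s|ξ| + y·ξ)} ζ̃_{κ,λ}(λξ) dξ. For every N ∈ ℕ there exists a constant C_N > 0 such that |K_{κ/λ,1}(s,y)| ≤ C_N λ^{−1} (s/λ)^{−N} for all s > 0, all y ∈ ℝ^d with |y| ≤ s/2, and all λ ∈ ℕ with λ ≥ κ + 1. -/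
/-!
In polar coordinates `ξ = rω` the phase is `r (s + y·ω)`, which is linear in `r` with slope
`a = s + y·ω ≥ s - |y|`. Substituting `r = 1 + u/λ`, the radial integral becomes
`λ⁻¹ e^{ia} ∫ e^{iu a/λ} (1 + u/λ)^{d-1} ζ(u) du`, the Fourier transform at frequency `a/λ` of a
test function that ranges over a bounded family, since `λ⁻¹ ≤ 1`. Hence it decays faster than any
power of `a/λ`, uniformly in the direction `ω`, and the sphere has finite measure.
-/

open MeasureTheory Complex
open scoped RealInnerProductSpace ENNReal

section PolarCoordinates

variable {E F : Type*} [NormedAddCommGroup E] [NormedSpace ℝ E] [FiniteDimensional ℝ E]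
  [MeasurableSpace E] [BorelSpace E] [NormedAddCommGroup F] [NormedSpace ℝ F]

theorem integral_volumeIoiPow (n : ℕ) (g : ℝ → F) :
    ∫ r, g r ∂(Measure.volumeIoiPow n) = ∫ r in Set.Ioi (0 : ℝ), r ^ n • g r := by
  simp only [Measure.volumeIoiPow, ENNReal.ofReal]
  rw [integral_withDensity_eq_integral_smul
      (measurable_subtype_coe.pow_const n).real_toNNReal,
    integral_subtype_comap measurableSet_Ioi fun r : ℝ ↦ Real.toNNReal (r ^ n) • g r]
  refine setIntegral_congr_fun measurableSet_Ioi fun r (hr : 0 < r) ↦ ?_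
  rw [NNReal.smul_def, Real.coe_toNNReal _ (by positivity)]

-- The origin is removed so that the formula also holds in dimension zero, where `{0}` is not null.
theorem integral_compl_zero_eq_integral_toSphere (μ : Measure E) [μ.IsAddHaarMeasure]
    {f : E → F} (hf : IntegrableOn f {0}ᶜ μ) :
    ∫ x in {0}ᶜ, f x ∂μ = ∫ ω, (∫ r in Set.Ioi (0 : ℝ),
      r ^ (Module.finrank ℝ E - 1) • f (r • (ω : E))) ∂μ.toSphere := by
  set g : Metric.sphere (0 : E) 1 × Set.Ioi (0 : ℝ) → F := fun p ↦ f (p.2.1 • p.1.1)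
  have h_compl : MeasurableSet ({0}ᶜ : Set E) := (measurableSet_singleton 0).compl
  have h_comp : g ∘ homeomorphUnitSphereProd E = f ∘ Subtype.val := by
    ext x
    have hx : ‖(x : E)‖ ≠ 0 := norm_ne_zero_iff.2 x.2
    simp [g, smul_smul, hx]
  have h_pres := μ.measurePreserving_homeomorphUnitSphereProd
  have h_emb := (homeomorphUnitSphereProd E).measurableEmbedding
  have hg : Integrable g (μ.toSphere.prod (.volumeIoiPow (Module.finrank ℝ E - 1))) := by
    rwa [← h_pres.integrable_comp_emb h_emb, h_comp, ← integrableOn_iff_comap_subtypeVal h_compl]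
  calc ∫ x in {0}ᶜ, f x ∂μ
      = ∫ x, (g ∘ homeomorphUnitSphereProd E) x ∂μ.comap ((↑) : ({0}ᶜ : Set E) → E) := by
        rw [h_comp, ← integral_subtype_comap h_compl f]; rfl
    _ = ∫ p, g p ∂μ.toSphere.prod (.volumeIoiPow (Module.finrank ℝ E - 1)) :=
        h_pres.integral_comp h_emb g
    _ = ∫ ω, (∫ r in Set.Ioi (0 : ℝ),
          r ^ (Module.finrank ℝ E - 1) • f (r • (ω : E))) ∂μ.toSphere := by
        rw [integral_prod _ hg]
        exact integral_congr_ae (.of_forall fun ω ↦ integral_volumeIoiPow _ fun r ↦ f (r • ω.1))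

theorem norm_integral_compl_zero_le_of_radial (μ : Measure E) [μ.IsAddHaarMeasure] {f : E → F}
    (hf : IntegrableOn f {0}ᶜ μ) {B : ℝ}
    (hB : ∀ ω : E, ‖ω‖ = 1 →
      ‖∫ r in Set.Ioi (0 : ℝ), r ^ (Module.finrank ℝ E - 1) • f (r • ω)‖ ≤ B) :
    ‖∫ x in {0}ᶜ, f x ∂μ‖ ≤ B * μ.toSphere.real Set.univ := by
  rw [integral_compl_zero_eq_integral_toSphere μ hf]
  exact norm_integral_le_of_norm_le_const (.of_forall fun ω ↦ hB ω (norm_eq_of_mem_sphere ω))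

end PolarCoordinates

section RadialIntegral

variable {F : Type*} [NormedAddCommGroup F] [NormedSpace ℂ F] {f : ℝ → F}

open FourierTransform in
theorem exists_abs_pow_mul_norm_integral_exp_smul_le (hf : ContDiff ℝ (⊤ : ℕ∞) f)
    (hc : HasCompactSupport f) (N : ℕ) :
    ∃ C > 0, ∀ τ : ℝ, |τ| ^ N * ‖∫ u : ℝ, cexp (I * ((τ * u : ℝ) : ℂ)) • f u‖ ≤ C := by
  obtain ⟨C, hC_pos, hC⟩ := (𝓕 (hc.toSchwartzMap hf)).decay N 0
  refine ⟨(2 * Real.pi) ^ N * C, by positivity, fun τ ↦ ?_⟩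
  obtain ⟨w, rfl⟩ : ∃ w, τ = -2 * Real.pi * w := ⟨-(τ / (2 * Real.pi)), by field_simp⟩
  have h_fourier : ∫ u : ℝ, cexp (I * ((-2 * Real.pi * w * u : ℝ) : ℂ)) • f u
      = (𝓕 (hc.toSchwartzMap hf)) w := by
    rw [SchwartzMap.fourier_coe, Real.fourier_real_eq_integral_exp_smul]
    simp only [HasCompactSupport.toSchwartzMap_toFun, mul_comm I, mul_right_comm _ w]
  have h_abs : |-2 * Real.pi * w| = 2 * Real.pi * ‖w‖ := by
    simp [abs_mul, abs_of_pos Real.pi_pos]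
  have h_decay := hC w
  rw [norm_iteratedFDeriv_zero] at h_decay
  rw [h_fourier, h_abs, mul_pow, mul_assoc]
  gcongr

theorem exists_abs_pow_mul_norm_integral_exp_smul_pow_smul_le (hf : ContDiff ℝ (⊤ : ℕ∞) f)
    (hc : HasCompactSupport f) (n N : ℕ) :
    ∃ C > 0, ∀ t : ℝ, |t| ≤ 1 → ∀ τ : ℝ,
      |τ| ^ N * ‖∫ u : ℝ, cexp (I * ((τ * u : ℝ) : ℂ)) • (1 + t * u) ^ n • f u‖ ≤ C := by
  induction n generalizing f with
  | zero =>
    obtain ⟨C, hC_pos, hC⟩ := exists_abs_pow_mul_norm_integral_exp_smul_le hf hc N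
    exact ⟨C, hC_pos, fun t _ τ ↦ by simpa using hC τ⟩
  | succ n ih =>
    have hf_mul : ContDiff ℝ (⊤ : ℕ∞) fun u : ℝ ↦ u • f u := contDiff_id.smul hf
    have hc_mul : HasCompactSupport fun u : ℝ ↦ u • f u := hc.smul_left
    obtain ⟨C₀, hC₀_pos, hC₀⟩ := ih hf hc
    obtain ⟨C₁, hC₁_pos, hC₁⟩ := ih hf_mul hc_mul
    refine ⟨C₀ + C₁, by positivity, fun t ht τ ↦ ?_⟩
    let J (g : ℝ → F) (m : ℕ) : F :=
      ∫ u : ℝ, cexp (I * ((τ * u : ℝ) : ℂ)) • (1 + t * u) ^ m • g u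
    have h_int {g : ℝ → F} (hg : Continuous g) (hgc : HasCompactSupport g) :
        Integrable fun u : ℝ ↦ cexp (I * ((τ * u : ℝ) : ℂ)) • (1 + t * u) ^ n • g u :=
      Continuous.integrable_of_hasCompactSupport (by fun_prop) hgc.smul_left.smul_left
    have h_split : J f (n + 1) = J f n + t • J (fun u ↦ u • f u) n := by
      simp only [J]
      rw [← integral_smul]
      refine .trans ?_ (integral_add (h_int hf.continuous hc)
        ((h_int hf_mul.continuous hc_mul).smul t))
      congr 1 with u
      module
    have h_smul : ‖t • J (fun u ↦ u • f u) n‖ ≤ ‖J (fun u ↦ u • f u) n‖ := by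
      rw [norm_smul]
      exact mul_le_of_le_one_left (norm_nonneg _) ht
    calc |τ| ^ N * ‖J f (n + 1)‖
        ≤ |τ| ^ N * (‖J f n‖ + ‖J (fun u ↦ u • f u) n‖) := by
          rw [h_split]
          gcongr
          exact norm_add_le_of_le le_rfl h_smul
      _ = |τ| ^ N * ‖J f n‖ + |τ| ^ N * ‖J (fun u ↦ u • f u) n‖ := mul_add ..
      _ ≤ C₀ + C₁ := add_le_add (hC₀ t ht τ) (hC₁ t ht τ)

theorem integral_Ioi_pow_smul_exp_smul_comp_mul_sub {lam : ℝ} (h_lam : 0 < lam)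
    (hf_zero : ∀ u ≤ -lam, f u = 0) (n : ℕ) (a : ℝ) :
    ∫ r in Set.Ioi (0 : ℝ), r ^ n • cexp (I * ((r * a : ℝ) : ℂ)) • f (lam * r - lam)
      = lam⁻¹ • cexp (I * a) •
        ∫ u : ℝ, cexp (I * ((a / lam * u : ℝ) : ℂ)) • (1 + lam⁻¹ * u) ^ n • f u := by
  let g : ℝ → F := fun u ↦
    cexp (I * a) • cexp (I * ((a / lam * u : ℝ) : ℂ)) • (1 + lam⁻¹ * u) ^ n • f u
  have h_subst (r : ℝ) :
      r ^ n • cexp (I * ((r * a : ℝ) : ℂ)) • f (lam * r - lam) = g (lam * r - lam) := by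
    have h_pow : 1 + lam⁻¹ * (lam * r - lam) = r := by field_simp; ring
    have h_phase : I * ((r * a : ℝ) : ℂ) = I * a + I * ((a / lam * (lam * r - lam) : ℝ) : ℂ) := by
      rw [← mul_add, ← ofReal_add]
      congr 2
      field_simp
      ring
    simp only [g, h_pow, h_phase, Complex.exp_add, mul_smul, smul_comm (r ^ n)]
  have h_zero (r : ℝ) (hr : r ∉ Set.Ioi (0 : ℝ)) : g (lam * r - lam) = 0 := by
    have : lam * r - lam ≤ -lam := by nlinarith [Set.notMem_Ioi.1 hr]
    simp [g, hf_zero _ this]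
  simp_rw [h_subst]
  rw [setIntegral_eq_integral_of_forall_compl_eq_zero h_zero,
    Measure.integral_comp_mul_left fun v ↦ g (v - lam), integral_sub_right_eq_self,
    abs_of_pos (inv_pos.2 h_lam), integral_smul]

theorem exists_abs_pow_mul_norm_integral_Ioi_pow_smul_exp_smul_le (hf : ContDiff ℝ (⊤ : ℕ∞) f)
    (hc : HasCompactSupport f) (n N : ℕ) :
    ∃ C > 0, ∀ lam : ℝ, 1 ≤ lam → (∀ u ≤ -lam, f u = 0) → ∀ a : ℝ,
      |a / lam| ^ N * ‖∫ r in Set.Ioi (0 : ℝ),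
        r ^ n • cexp (I * ((r * a : ℝ) : ℂ)) • f (lam * r - lam)‖ ≤ C * lam⁻¹ := by
  obtain ⟨C, hC_pos, hC⟩ := exists_abs_pow_mul_norm_integral_exp_smul_pow_smul_le hf hc n N
  refine ⟨C, hC_pos, fun lam h_lam hf_zero a ↦ ?_⟩
  have h_inv : |lam⁻¹| ≤ 1 := by
    rw [abs_inv]
    exact inv_le_one_of_one_le₀ (h_lam.trans (le_abs_self lam))
  rw [integral_Ioi_pow_smul_exp_smul_comp_mul_sub (by positivity) hf_zero, norm_smul, norm_smul,
    norm_exp_I_mul_ofReal, one_mul, Real.norm_of_nonneg (by positivity), mul_left_comm, mul_comm C]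
  gcongr
  exact hC lam⁻¹ h_inv (a / lam)

end RadialIntegral

theorem hasCompactSupport_comp_mul_norm_sub {E F : Type*} [SeminormedAddCommGroup E] [ProperSpace E]
    [Zero F] {f : ℝ → F} (hf : HasCompactSupport f) {a : ℝ} (ha : 0 < a) (b : ℝ) :
    HasCompactSupport fun x : E ↦ f (a * ‖x‖ - b) := by
  rw [hasCompactSupport_iff_eventuallyEq, Filter.coclosedCompact_eq_cocompact] at hf ⊢
  have h_tendsto : Filter.Tendsto (fun x : E ↦ a * ‖x‖ - b) (.cocompact E) .atTop :=
    Filter.tendsto_atTop_add_const_right _ _ <|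
      (tendsto_norm_cocompact_atTop (E := E)).const_mul_atTop ha
  exact (h_tendsto.mono_right atTop_le_cocompact).eventually hf

section HalfwaveKernel

variable {E F : Type*} [NormedAddCommGroup E] [InnerProductSpace ℝ E]
  [NormedAddCommGroup F] [NormedSpace ℂ F]

/-- The oscillatory integrand `e^{i(s|ξ| + y·ξ)} ζ(λ|ξ| - λ)` of the rescaled half-wave kernel. The
factor `ζ(λ|ξ| - λ)` is the symbol `ζ̃_{κ,λ}(λξ)`, given by its radial profile `ζ`. -/
noncomputable def halfwaveIntegrand (ζ : ℝ → F) (lam s : ℝ) (y ξ : E) : F :=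
  cexp (I * ((s * ‖ξ‖ + ⟪y, ξ⟫ : ℝ) : ℂ)) • ζ (lam * ‖ξ‖ - lam)

/-- The rescaled half-wave kernel `K_{κ/λ,1}(s,y)` with radial cutoff profile `ζ`, where the
integral over frequencies is taken with respect to `μ`. -/
noncomputable def halfwaveKernel [MeasurableSpace E] (μ : Measure E) (ζ : ℝ → F) (lam s : ℝ)
    (y : E) : F :=
  ∫ ξ, halfwaveIntegrand ζ lam s y ξ ∂μ

theorem halfwaveIntegrand_smul (ζ : ℝ → F) (lam s : ℝ) (y : E) {ω : E} (hω : ‖ω‖ = 1) {r : ℝ}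
    (hr : 0 ≤ r) :
    halfwaveIntegrand ζ lam s y (r • ω)
      = cexp (I * ((r * (s + ⟪y, ω⟫) : ℝ) : ℂ)) • ζ (lam * r - lam) := by
  have h_norm : ‖r • ω‖ = r := by rw [norm_smul, hω, mul_one, Real.norm_of_nonneg hr]
  have h_phase : s * r + ⟪y, r • ω⟫ = r * (s + ⟪y, ω⟫) := by rw [inner_smul_right]; ring
  rw [halfwaveIntegrand, h_norm, h_phase]

theorem integrable_halfwaveIntegrand [FiniteDimensional ℝ E] [MeasurableSpace E] [BorelSpace E]
    (μ : Measure E) [IsFiniteMeasureOnCompacts μ] {ζ : ℝ → F} (hζ_cont : Continuous ζ)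
    (hζ_supp : HasCompactSupport ζ) {lam : ℝ} (h_lam : 0 < lam) (s : ℝ) (y : E) :
    Integrable (halfwaveIntegrand ζ lam s y) μ := by
  have := FiniteDimensional.proper_real E
  refine Continuous.integrable_of_hasCompactSupport ?_
    (hasCompactSupport_comp_mul_norm_sub hζ_supp h_lam lam).smul_left
  unfold halfwaveIntegrand
  fun_prop

theorem sub_norm_le_add_inner (s : ℝ) (y : E) {ω : E} (hω : ‖ω‖ = 1) : s - ‖y‖ ≤ s + ⟪y, ω⟫ := by
  have h_inner : |⟪y, ω⟫| ≤ ‖y‖ := by simpa [hω] using abs_real_inner_le_norm y ω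
  linarith [neg_abs_le ⟪y, ω⟫]

variable [FiniteDimensional ℝ E] [MeasurableSpace E] [BorelSpace E]
  (μ : Measure E) [μ.IsAddHaarMeasure] {ζ : ℝ → F}

theorem exists_norm_halfwaveKernel_le_sub_norm (hζ_smooth : ContDiff ℝ (⊤ : ℕ∞) ζ)
    (hζ_supp : HasCompactSupport ζ) (N : ℕ) :
    ∃ C > 0, ∀ lam : ℝ, 1 ≤ lam → (∀ u ≤ -lam, ζ u = 0) → ∀ (s : ℝ) (y : E), ‖y‖ < s →
      ‖halfwaveKernel μ ζ lam s y‖ ≤ C * lam⁻¹ / ((s - ‖y‖) / lam) ^ N := by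
  obtain ⟨C, hC_pos, hC⟩ := exists_abs_pow_mul_norm_integral_Ioi_pow_smul_exp_smul_le hζ_smooth
    hζ_supp (Module.finrank ℝ E - 1) N
  set S := μ.toSphere.real Set.univ
  refine ⟨C * (S + 1), by positivity, fun lam h_lam hζ_zero s y hy ↦ ?_⟩
  have h_lam_pos : 0 < lam := by positivity
  have : 0 < s - ‖y‖ := sub_pos.2 hy
  have h_radial (ω : E) (hω : ‖ω‖ = 1) :
      ‖∫ r in Set.Ioi (0 : ℝ),
        r ^ (Module.finrank ℝ E - 1) • halfwaveIntegrand ζ lam s y (r • ω)‖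
        ≤ C * lam⁻¹ / ((s - ‖y‖) / lam) ^ N := by
    rw [setIntegral_congr_fun measurableSet_Ioi fun r (hr : 0 < r) ↦
      congrArg (r ^ _ • ·) (halfwaveIntegrand_smul ζ lam s y hω hr.le),
      le_div_iff₀' (by positivity)]
    have h_slope : (s - ‖y‖) / lam ≤ |(s + ⟪y, ω⟫) / lam| :=
      (div_le_div_of_nonneg_right (sub_norm_le_add_inner s y hω) h_lam_pos.le).trans (le_abs_self _)
    exact le_trans (by gcongr) (hC lam h_lam hζ_zero (s + ⟪y, ω⟫))
  have h_origin (ξ : E) (hξ : ξ ∉ ({0}ᶜ : Set E)) : halfwaveIntegrand ζ lam s y ξ = 0 := by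
    obtain rfl : ξ = 0 := by simpa using hξ
    simp [halfwaveIntegrand, hζ_zero]
  calc ‖halfwaveKernel μ ζ lam s y‖
      = ‖∫ ξ in {0}ᶜ, halfwaveIntegrand ζ lam s y ξ ∂μ‖ := by
        rw [halfwaveKernel, setIntegral_eq_integral_of_forall_compl_eq_zero h_origin]
    _ ≤ C * lam⁻¹ / ((s - ‖y‖) / lam) ^ N * S :=
        norm_integral_compl_zero_le_of_radial μ (integrable_halfwaveIntegrand μ
          hζ_smooth.continuous hζ_supp h_lam_pos s y).integrableOn h_radial
    _ ≤ C * lam⁻¹ / ((s - ‖y‖) / lam) ^ N * (S + 1) := by gcongr; linarith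
    _ = C * (S + 1) * lam⁻¹ / ((s - ‖y‖) / lam) ^ N := by ring

theorem halfwave_rescaled_kernel_nonstationary_general {κ θ : ℝ} (hθ : θ < 1)
    (hζ_smooth : ContDiff ℝ (⊤ : ℕ∞) ζ) (hζ_zero : ∀ u, κ < |u| → ζ u = 0) (N : ℕ) :
    ∃ C > 0, ∀ s : ℝ, 0 < s → ∀ y : E, ‖y‖ ≤ θ * s → ∀ lam : ℝ, 1 ≤ lam → κ < lam →
      ‖halfwaveKernel μ ζ lam s y‖ ≤ C * lam⁻¹ * (s / lam) ^ (-(N : ℝ)) := by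
  have hζ_supp : HasCompactSupport ζ := .intro (isCompact_closedBall 0 κ) fun u hu ↦
    hζ_zero u (by simpa using hu)
  obtain ⟨C, hC_pos, hC⟩ := exists_norm_halfwaveKernel_le_sub_norm μ hζ_smooth hζ_supp N
  have h_gap : 0 < 1 - θ := sub_pos.2 hθ
  refine ⟨C / (1 - θ) ^ N, by positivity, fun s hs y hy lam h_lam hκ ↦ ?_⟩
  have hζ_left (u : ℝ) (hu : u ≤ -lam) : ζ u = 0 := hζ_zero u (by linarith [neg_le_abs u])
  have h_slope : (1 - θ) * s ≤ s - ‖y‖ := by linarith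
  have h_inside : ‖y‖ < s := by nlinarith
  calc ‖halfwaveKernel μ ζ lam s y‖
      ≤ C * lam⁻¹ / ((s - ‖y‖) / lam) ^ N := hC lam h_lam hζ_left s y h_inside
    _ ≤ C * lam⁻¹ / ((1 - θ) * s / lam) ^ N := by gcongr
    _ = C / (1 - θ) ^ N * lam⁻¹ * (s / lam) ^ (-(N : ℝ)) := by
        rw [Real.rpow_neg (by positivity), Real.rpow_natCast, mul_div_assoc (1 - θ), mul_pow]
        field_simp

end HalfwaveKernel

/-- Non-stationary phase bound on the rescaled half-wave kernel
`K_{κ/λ,1}(s,y) = ∫ e^{i(s|ξ|+y·ξ)} ζ̃_{κ,λ}(λξ) dξ`: for every `N` one has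
`|K_{κ/λ,1}(s,y)| ≤ C_N λ⁻¹ (s/λ)^{−N}` whenever `|y| ≤ s/2`, `s > 0`, `λ ≥ κ + 1`. -/
theorem halfwave_rescaled_kernel_nonstationary (d : ℕ) (hd : 2 ≤ d) (κ : ℝ) (hκ : 1 ≤ κ)
    (ζt : ℝ → ℝ) (hζ_smooth : ContDiff ℝ (⊤ : ℕ∞) ζt) (hζ_nonneg : ∀ s, 0 ≤ ζt s)
    (hζ_one : ∀ s : ℝ, |s| ≤ 3 / 4 * κ → ζt s = 1)
    (hζ_zero : ∀ s : ℝ, κ < |s| → ζt s = 0) :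
    ∀ N : ℕ, ∃ C > 0, ∀ s : ℝ, 0 < s → ∀ y : EuclideanSpace ℝ (Fin d), ‖y‖ ≤ s / 2 →
      ∀ lam : ℕ, κ + 1 ≤ (lam : ℝ) →
        ‖∫ ξ : EuclideanSpace ℝ (Fin d),
            Complex.exp (Complex.I * ((s * ‖ξ‖ + ⟪y, ξ⟫ : ℝ) : ℂ)) *
              ((ζt ((lam : ℝ) * ‖ξ‖ - lam) : ℝ) : ℂ)‖
          ≤ C * (lam : ℝ)⁻¹ * (s / lam) ^ (-(N : ℝ)) := by
  intro N
  obtain ⟨C, hC_pos, hC⟩ := halfwave_rescaled_kernel_nonstationary_general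
    (volume : Measure (EuclideanSpace ℝ (Fin d))) (θ := 1 / 2) (by norm_num)
    (ofRealCLM.contDiff.comp hζ_smooth) (fun u hu ↦ by simp [hζ_zero u hu]) N
  exact ⟨C, hC_pos, fun s hs y hy lam h_lam ↦
    hC s hs y (by linarith) lam (by linarith) (by linarith)⟩
end

section
/- Let d ≥ 2 and c > 0. There exists a constant C > 0 such that | ∫_0^π e^{i r cos(θ)} sin^{d−2}(θ) dθ | ≤ C r^{−(d−1)/2} for all real r ≥ c. -/
open Complex

/-!
Put `n = d - 2`. Differentiating under the integral sign twice and integrating by parts once shows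
that `G r = ∫₀^π e^{i r cos θ} sinⁿ θ dθ` solves the Bessel-type equation
`r (G'' + G) + 2 a G' = 0`, where `a = (n + 1) / 2 = (d - 1) / 2`.

Decay then comes from an energy estimate instead of a stationary-phase expansion: `u = r ^ a G`
solves `u'' = (a (a - 1) / r² - 1) u`, so its energy `‖u‖² + ‖u'‖²` has logarithmic derivative at
most `|a (a - 1)| / r²`. This is integrable at infinity, hence `u` is bounded on `[c, ∞)`.
-/

open MeasureTheory Set
open scoped RealInnerProductSpace

section OscillatoryIntegral

/-- The oscillatory integral `∫_a^b e^{i r φ(θ)} w(θ) dθ` with phase `φ` and amplitude `w`, as a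
function of the frequency `r`. -/
noncomputable def oscillatoryIntegral (φ : ℝ → ℝ) (w : ℝ → ℂ) (a b r : ℝ) : ℂ :=
  ∫ θ in a..b, exp (I * r * φ θ) * w θ

variable {φ φ' : ℝ → ℝ} {w w' w₁ w₂ : ℝ → ℂ} {a b : ℝ}

lemma intervalIntegrable_cexp_phase_mul (hφ : ContinuousOn φ (uIcc a b))
    (hw : IntervalIntegrable w volume a b) (r : ℝ) :
    IntervalIntegrable (fun θ ↦ exp (I * r * φ θ) * w θ) volume a b :=
  hw.continuousOn_mul (by fun_prop)

lemma oscillatoryIntegral_add (hφ : ContinuousOn φ (uIcc a b))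
    (hw₁ : IntervalIntegrable w₁ volume a b) (hw₂ : IntervalIntegrable w₂ volume a b) (r : ℝ) :
    oscillatoryIntegral φ (fun θ ↦ w₁ θ + w₂ θ) a b r =
      oscillatoryIntegral φ w₁ a b r + oscillatoryIntegral φ w₂ a b r := by
  simp only [oscillatoryIntegral, mul_add]
  exact intervalIntegral.integral_add (intervalIntegrable_cexp_phase_mul hφ hw₁ r)
    (intervalIntegrable_cexp_phase_mul hφ hw₂ r)

lemma oscillatoryIntegral_const_mul (φ : ℝ → ℝ) (w : ℝ → ℂ) (a b : ℝ) (z : ℂ) (r : ℝ) :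
    oscillatoryIntegral φ (fun θ ↦ z * w θ) a b r = z * oscillatoryIntegral φ w a b r := by
  simp only [oscillatoryIntegral, mul_left_comm _ z, intervalIntegral.integral_const_mul]

lemma norm_cexp_I_mul_mul (x y : ℝ) : ‖exp (I * x * y)‖ = 1 := by
  rw [mul_assoc, ← ofReal_mul, norm_exp_I_mul_ofReal]

lemma hasDerivAt_oscillatoryIntegral (hφ : ContinuousOn φ (uIcc a b))
    (hw : IntervalIntegrable w volume a b) (r : ℝ) :
    HasDerivAt (oscillatoryIntegral φ w a b)
      (oscillatoryIntegral φ (fun θ ↦ I * φ θ * w θ) a b r) r := by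
  have hφw : IntervalIntegrable (fun θ ↦ I * φ θ * w θ) volume a b :=
    hw.continuousOn_mul (by fun_prop)
  refine (intervalIntegral.hasDerivAt_integral_of_dominated_loc_of_deriv_le
    (F' := fun (x : ℝ) θ ↦ exp (I * x * φ θ) * (I * φ θ * w θ))
    (bound := fun θ ↦ ‖I * φ θ * w θ‖) Filter.univ_mem
    (.of_forall fun x ↦ (intervalIntegrable_cexp_phase_mul hφ hw x).def'.aestronglyMeasurable)
    (intervalIntegrable_cexp_phase_mul hφ hw r)
    (intervalIntegrable_cexp_phase_mul hφ hφw r).def'.aestronglyMeasurable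
    (.of_forall fun θ _ x _ ↦ by rw [norm_mul (exp _), norm_cexp_I_mul_mul, one_mul])
    hφw.norm (.of_forall fun θ _ x _ ↦ ?_)).2
  have hexp : HasDerivAt (fun y : ℝ ↦ exp (I * y * φ θ))
      (exp (I * x * φ θ) * (I * 1 * φ θ)) x :=
    ((((hasDerivAt_id x).ofReal_comp).const_mul I).mul_const _).cexp
  exact (hexp.mul_const (w θ)).congr_deriv (by ring)

lemma mul_oscillatoryIntegral_deriv_phase_mul (hφ : ∀ θ ∈ uIcc a b, HasDerivAt φ (φ' θ) θ)
    (hw : ∀ θ ∈ uIcc a b, HasDerivAt w (w' θ) θ) (hφ' : IntervalIntegrable φ' volume a b)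
    (hw' : IntervalIntegrable w' volume a b) (r : ℝ) :
    I * r * oscillatoryIntegral φ (fun θ ↦ φ' θ * w θ) a b r =
      exp (I * r * φ b) * w b - exp (I * r * φ a) * w a - oscillatoryIntegral φ w' a b r := by
  have hexp (θ : ℝ) (hθ : θ ∈ uIcc a b) : HasDerivAt (fun θ ↦ exp (I * r * φ θ))
      (exp (I * r * φ θ) * (I * r * φ' θ)) θ :=
    ((hφ θ hθ).ofReal_comp.const_mul (I * r)).cexp
  have hexp' : IntervalIntegrable (fun θ ↦ exp (I * r * φ θ) * (I * r * φ' θ)) volume a b :=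
    intervalIntegrable_cexp_phase_mul (HasDerivAt.continuousOn hφ)
      (IntervalIntegrable.const_mul ⟨hφ'.1.ofReal, hφ'.2.ofReal⟩ _) r
  rw [oscillatoryIntegral, oscillatoryIntegral,
    intervalIntegral.integral_mul_deriv_eq_deriv_mul hexp hw hexp' hw', sub_sub_cancel,
    ← intervalIntegral.integral_const_mul]
  congr 1 with θ
  ring

end OscillatoryIntegral

section LiouvilleSubstitution

variable {F : Type*} [NormedAddCommGroup F] [NormedSpace ℝ F]

lemma hasDerivAt_rpow_smul {f : ℝ → F} {f' : F} {r : ℝ} (hr : r ≠ 0) (a : ℝ)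
    (hf : HasDerivAt f f' r) :
    HasDerivAt (fun r ↦ r ^ a • f r) (r ^ a • f' + (a * r ^ (a - 1)) • f r) r :=
  (Real.hasDerivAt_rpow_const (.inl hr)).smul hf

/-- The Liouville substitution `u = r ^ a G` removes the first-order term of the equation. -/
lemma hasDerivAt_deriv_rpow_smul_of_bessel {G G₁ : ℝ → F} {G₂ : F} {a r : ℝ}
    (hr : 0 < r) (hG : HasDerivAt G (G₁ r) r) (hG₁ : HasDerivAt G₁ G₂ r)
    (bessel : r • (G₂ + G r) + (2 * a) • G₁ r = 0) :
    HasDerivAt (fun r ↦ r ^ a • G₁ r + (a * r ^ (a - 1)) • G r)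
      ((a * (a - 1) / r ^ 2 - 1) • r ^ a • G r) r := by
  have hG₂ : G₂ = -(2 * a / r) • G₁ r - G r := eq_sub_of_add_eq <| by
    rw [← inv_smul_smul₀ hr.ne' (G₂ + G r), eq_neg_of_add_eq_zero_left bessel]
    module
  simp only [mul_smul a]
  refine ((hasDerivAt_rpow_smul hr.ne' a hG₁).add
    ((hasDerivAt_rpow_smul hr.ne' (a - 1) hG).const_smul a)).congr_deriv ?_
  simp only [hG₂, Real.rpow_sub_one hr.ne']
  match_scalars <;> field_simp <;> ring

end LiouvilleSubstitution

section BesselEquation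

variable {E : Type*} [NormedAddCommGroup E] [InnerProductSpace ℝ E] {u v G G₁ G₂ : ℝ → E}

/-- The rotation part `u'' = -u` conserves the energy, so only the perturbation `q` contributes. -/
lemma antitoneOn_energy_mul_exp_neg {q Q Q' : ℝ → ℝ} {D : Set ℝ} (hD : Convex ℝ D)
    (hu : ∀ r ∈ D, HasDerivAt u (v r) r) (hv : ∀ r ∈ D, HasDerivAt v ((q r - 1) • u r) r)
    (hQ : ∀ r ∈ D, HasDerivAt Q (Q' r) r) (hq : ∀ r ∈ D, |q r| ≤ Q' r) :
    AntitoneOn (fun r ↦ (‖u r‖ ^ 2 + ‖v r‖ ^ 2) * Real.exp (-Q r)) D := by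
  have hderiv (r : ℝ) (hr : r ∈ D) :
      HasDerivAt (fun r ↦ (‖u r‖ ^ 2 + ‖v r‖ ^ 2) * Real.exp (-Q r))
        ((2 * q r * ⟪u r, v r⟫ - Q' r * (‖u r‖ ^ 2 + ‖v r‖ ^ 2)) * Real.exp (-Q r)) r := by
    refine (((hu r hr).norm_sq.add (hv r hr).norm_sq).mul (hQ r hr).neg.exp).congr_deriv ?_
    simp only [Pi.add_apply, Pi.neg_apply, inner_smul_right, real_inner_comm (u r) (v r)]
    ring
  refine antitoneOn_of_hasDerivWithinAt_nonpos hD (HasDerivAt.continuousOn hderiv)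
    (fun r hr ↦ (hderiv r (interior_subset hr)).hasDerivWithinAt) fun r hr ↦
      mul_nonpos_of_nonpos_of_nonneg (sub_nonpos.2 ?_) (Real.exp_nonneg _)
  calc 2 * q r * ⟪u r, v r⟫ ≤ |2 * q r * ⟪u r, v r⟫| := le_abs_self _
    _ = |q r| * (2 * |⟪u r, v r⟫|) := by rw [abs_mul, abs_mul, abs_two]; ring
    _ ≤ |q r| * (2 * (‖u r‖ * ‖v r‖)) := by gcongr; exact abs_real_inner_le_norm _ _
    _ ≤ |q r| * (‖u r‖ ^ 2 + ‖v r‖ ^ 2) := by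
      gcongr; linarith [two_mul_le_add_sq ‖u r‖ ‖v r‖]
    _ ≤ Q' r * (‖u r‖ ^ 2 + ‖v r‖ ^ 2) := by gcongr; exact hq r (interior_subset hr)

lemma exists_norm_le_of_hasDerivAt_oscillator {c K : ℝ} {q : ℝ → ℝ} (hc : 0 < c)
    (hu : ∀ r ∈ Ici c, HasDerivAt u (v r) r)
    (hv : ∀ r ∈ Ici c, HasDerivAt v ((q r - 1) • u r) r)
    (hq : ∀ r ∈ Ici c, |q r| ≤ K / r ^ 2) :
    ∃ C > 0, ∀ r ∈ Ici c, ‖u r‖ ≤ C := by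
  have hK : 0 ≤ K := by
    have := (abs_nonneg _).trans (hq c self_mem_Ici)
    rwa [le_div_iff₀ (by positivity), zero_mul] at this
  have hQ (r : ℝ) (hr : r ∈ Ici c) : HasDerivAt (fun r ↦ -(K / r)) (K / r ^ 2) r :=
    (((hasDerivAt_inv (hc.trans_le hr).ne').const_mul K).neg).congr_deriv (by ring)
  have hanti := antitoneOn_energy_mul_exp_neg (convex_Ici c) hu hv hQ hq
  simp only [neg_neg] at hanti
  set M := (‖u c‖ ^ 2 + ‖v c‖ ^ 2) * Real.exp (K / c)
  refine ⟨√M + 1, by positivity, fun r hr ↦ ?_⟩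
  have hr₀ : 0 < r := hc.trans_le hr
  have hsq : ‖u r‖ ^ 2 ≤ M := calc
    ‖u r‖ ^ 2 ≤ ‖u r‖ ^ 2 + ‖v r‖ ^ 2 := le_add_of_nonneg_right (by positivity)
    _ ≤ (‖u r‖ ^ 2 + ‖v r‖ ^ 2) * Real.exp (K / r) :=
      le_mul_of_one_le_right (by positivity) (Real.one_le_exp (by positivity))
    _ ≤ M := hanti self_mem_Ici hr hr
  linarith [Real.le_sqrt_of_sq_le hsq]

theorem exists_norm_le_rpow_neg_of_bessel {a c : ℝ} (hc : 0 < c)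
    (hG : ∀ r ∈ Ici c, HasDerivAt G (G₁ r) r) (hG₁ : ∀ r ∈ Ici c, HasDerivAt G₁ (G₂ r) r)
    (bessel : ∀ r ∈ Ici c, r • (G₂ r + G r) + (2 * a) • G₁ r = 0) :
    ∃ C > 0, ∀ r ∈ Ici c, ‖G r‖ ≤ C * r ^ (-a) := by
  have pos (r : ℝ) (hr : r ∈ Ici c) : 0 < r := hc.trans_le hr
  obtain ⟨C, hC, bound⟩ := exists_norm_le_of_hasDerivAt_oscillator (K := |a * (a - 1)|) hc
    (fun r hr ↦ hasDerivAt_rpow_smul (pos r hr).ne' a (hG r hr))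
    (fun r hr ↦
      hasDerivAt_deriv_rpow_smul_of_bessel (pos r hr) (hG r hr) (hG₁ r hr) (bessel r hr))
    (fun r _ ↦ by rw [abs_div, abs_sq])
  refine ⟨C, hC, fun r hr ↦ ?_⟩
  have hra : 0 < r ^ a := Real.rpow_pos_of_pos (pos r hr) a
  rw [Real.rpow_neg (pos r hr).le, ← div_eq_mul_inv, le_div_iff₀' hra]
  simpa only [norm_smul, Real.norm_of_nonneg hra.le] using bound r hr

end BesselEquation

lemma mul_oscillatoryIntegral_cos_sin_pow_add_two (n : ℕ) (r : ℝ) :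
    I * r * oscillatoryIntegral Real.cos (fun θ ↦ (Real.sin θ ^ (n + 2) : ℝ)) 0 Real.pi r =
      (n + 1) * oscillatoryIntegral Real.cos
        (fun θ ↦ Real.cos θ * (Real.sin θ ^ n : ℝ)) 0 Real.pi r := by
  have hsin (θ : ℝ) : HasDerivAt (fun θ ↦ ((Real.sin θ ^ (n + 1) : ℝ) : ℂ))
      ((n + 1) * (Real.cos θ * (Real.sin θ ^ n : ℝ))) θ :=
    ((Real.hasDerivAt_sin θ).pow (n + 1)).ofReal_comp.congr_deriv (by
      push_cast [Nat.add_sub_cancel]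
      ring)
  have hparts := mul_oscillatoryIntegral_deriv_phase_mul (a := 0) (b := Real.pi)
    (fun θ _ ↦ Real.hasDerivAt_cos θ) (fun θ _ ↦ hsin θ)
    (Continuous.intervalIntegrable (by fun_prop) _ _)
    (Continuous.intervalIntegrable (by fun_prop) _ _) r
  have hamplitude : (fun θ ↦ ((-Real.sin θ : ℝ) : ℂ) * (Real.sin θ ^ (n + 1) : ℝ)) =
      fun θ ↦ -1 * ((Real.sin θ ^ (n + 2) : ℝ) : ℂ) := by
    ext θ; push_cast; ring
  simp only [hamplitude, oscillatoryIntegral_const_mul, Real.sin_pi, Real.sin_zero,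
    zero_pow n.succ_ne_zero, ofReal_zero, mul_zero, sub_zero, zero_sub] at hparts
  linear_combination -hparts

lemma bessel_oscillatoryIntegral_cos_sin_pow (n : ℕ) (r : ℝ) :
    r • (oscillatoryIntegral Real.cos
          (fun θ ↦ I * Real.cos θ * (I * Real.cos θ * (Real.sin θ ^ n : ℝ))) 0 Real.pi r +
        oscillatoryIntegral Real.cos (fun θ ↦ (Real.sin θ ^ n : ℝ)) 0 Real.pi r) +
      ((n : ℝ) + 1) • oscillatoryIntegral Real.cos
        (fun θ ↦ I * Real.cos θ * (Real.sin θ ^ n : ℝ)) 0 Real.pi r = 0 := by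
  have hpythagoras : (fun θ ↦ I * Real.cos θ * (I * Real.cos θ * (Real.sin θ ^ n : ℝ)) +
      ((Real.sin θ ^ n : ℝ) : ℂ)) = fun θ ↦ ((Real.sin θ ^ (n + 2) : ℝ) : ℂ) := by
    ext θ
    rw [pow_add, Real.sin_sq]
    push_cast
    linear_combination (Complex.cos θ ^ 2 * Complex.sin θ ^ n) * I_sq
  rw [← oscillatoryIntegral_add Real.continuous_cos.continuousOn
    (Continuous.intervalIntegrable (by fun_prop) _ _)
    (Continuous.intervalIntegrable (by fun_prop) _ _), hpythagoras]
  simp only [mul_assoc I, oscillatoryIntegral_const_mul, real_smul, ofReal_add,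
    ofReal_natCast, ofReal_one]
  linear_combination -I * mul_oscillatoryIntegral_cos_sin_pow_add_two n r +
    r * oscillatoryIntegral Real.cos (fun θ ↦ (Real.sin θ ^ (n + 2) : ℝ)) 0 Real.pi r * I_sq

/-- Stationary-phase decay of the oscillatory integral
`∫_0^π e^{i r cos θ} sin^{d−2}(θ) dθ` for `r ≥ c`. -/
theorem oscillatory_sphere_integral_decay (d : ℕ) (hd : 2 ≤ d) (c : ℝ) (hc : 0 < c) :
    ∃ C > 0, ∀ r : ℝ, c ≤ r →
      ‖∫ θ in (0:ℝ)..Real.pi,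
          Complex.exp (Complex.I * r * Real.cos θ) * ((Real.sin θ ^ (d - 2) : ℝ) : ℂ)‖
        ≤ C * r ^ (-((d : ℝ) - 1) / 2) := by
  obtain ⟨n, rfl⟩ := Nat.exists_eq_add_of_le' hd
  have hderiv (w : ℝ → ℂ) (hw : Continuous w) (r : ℝ) :=
    hasDerivAt_oscillatoryIntegral (a := 0) (b := Real.pi) Real.continuous_cos.continuousOn
      (hw.intervalIntegrable _ _) r
  have hexponent : -(((n + 2 : ℕ) : ℝ) - 1) / 2 = -(((n : ℝ) + 1) / 2) := by
    push_cast; ring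
  rw [hexponent, Nat.add_sub_cancel]
  exact exists_norm_le_rpow_neg_of_bessel hc
    (fun r _ ↦ hderiv (fun θ ↦ (Real.sin θ ^ n : ℝ)) (by fun_prop) r)
    (fun r _ ↦ hderiv _ (by fun_prop) r)
    (fun r _ ↦ by
      rw [mul_div_cancel₀ _ two_ne_zero]
      exact bessel_oscillatoryIntegral_cos_sin_pow n r)
end
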